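/- Let C be a copula with attained asymmetry m. Then g(m) ≤ γ(C) ≤ h(m), where γ(C) is Gini's gamma of C, g(m) = 4m² − 1 if 0 ≤ m ≤ 1/4 and g(m) = 20m² − 8m if 1/4 ≤ m ≤ 1/3, and h(m) = 1 − 8m² if 0 ≤ m ≤ 1/6, h(m) = 12m − 44m² if 1/6 ≤ m ≤ 1/5, h(m) = 1 + 2m − 19m² if 1/5 ≤ m ≤ 1/4, and h(m) = 2 − 6m − 3m² if 1/4 ≤ m ≤ 1/3. In particular, if m = 1/3 then γ(C) ∈ [−4/9, −1/3]. -/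

import Mathlib

open Set MeasureTheory intervalIntegral

/-- A bivariate copula: boundary conditions plus the 2-increasing property. -/
def IsCopula (C : ℝ → ℝ → ℝ) : Prop :=
  (∀ u ∈ Set.Icc (0:ℝ) 1, C u 0 = 0 ∧ C 0 u = 0 ∧ C u 1 = u ∧ C 1 u = u) ∧
  ∀ u₁ u₂ v₁ v₂ : ℝ, 0 ≤ u₁ → u₁ ≤ u₂ → u₂ ≤ 1 → 0 ≤ v₁ → v₁ ≤ v₂ → v₂ ≤ 1 →
    0 ≤ C u₂ v₂ - C u₂ v₁ - C u₁ v₂ + C u₁ v₁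

/-- The lower bound function C̲^{(a,b)}_c. -/
noncomputable def lowerC (a b c : ℝ) : ℝ → ℝ → ℝ := fun u v =>
  max (max (u + v - 1) 0)
    (min (min (max (a + b - 1) 0 + c) (u - a + (max (a + b - 1) 0 + c)))
      (min (v - b + (max (a + b - 1) 0 + c)) (u + v - a - b + (max (a + b - 1) 0 + c))))

/-- The upper bound function C̄^{(a,b)}_c. -/
noncomputable def upperC (a b c : ℝ) : ℝ → ℝ → ℝ := fun u v =>
  min (min u v)
    (max (max (min a b - c) (u - b + (min a b - c)))
      (max (v - a + (min a b - c)) (u + v - a - b + (min a b - c))))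

/-- Spearman's rho of a copula. -/
noncomputable def spearmanRho (C : ℝ → ℝ → ℝ) : ℝ :=
  12 * (∫ u in (0:ℝ)..1, ∫ v in (0:ℝ)..1, C u v) - 3

/-- Spearman's footrule of a copula. -/
noncomputable def spearmanFootrule (C : ℝ → ℝ → ℝ) : ℝ :=
  6 * (∫ u in (0:ℝ)..1, C u u) - 2

/-- Gini's gamma of a copula. -/
noncomputable def giniGamma (C : ℝ → ℝ → ℝ) : ℝ :=
  4 * (∫ u in (0:ℝ)..1, (C u u + C u (1 - u))) - 2

/-- Blomqvist's beta of a copula. -/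
noncomputable def blomqvistBeta (C : ℝ → ℝ → ℝ) : ℝ :=
  4 * C (1/2) (1/2) - 1

theorem one_sub_mem_Icc {u : ℝ} (hu : u ∈ Icc (0 : ℝ) 1) : 1 - u ∈ Icc (0 : ℝ) 1 :=
  ⟨by linarith [hu.2], by linarith [hu.1]⟩

namespace IsCopula

variable {C : ℝ → ℝ → ℝ}

/-- The transpose of a copula is a copula. -/
theorem transpose (hC : IsCopula C) : IsCopula (fun u v => C v u) := by
  refine ⟨fun u hu => ?_, fun u₁ u₂ v₁ v₂ h1 h2 h3 h4 h5 h6 => ?_⟩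
  · obtain ⟨h1, h2, h3, h4⟩ := hC.1 u hu
    exact ⟨h2, h1, h4, h3⟩
  · have := hC.2 v₁ v₂ u₁ u₂ h4 h5 h6 h1 h2 h3
    dsimp only
    linarith

theorem mono_left (hC : IsCopula C) {u u' v : ℝ} (hu : 0 ≤ u) (huu : u ≤ u') (hu' : u' ≤ 1)
    (hv : 0 ≤ v) (hv' : v ≤ 1) : C u v ≤ C u' v := by
  have h := hC.2 u u' 0 v hu huu hu' le_rfl hv hv'
  have h1 := (hC.1 u ⟨hu, huu.trans hu'⟩).1
  have h2 := (hC.1 u' ⟨hu.trans huu, hu'⟩).1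
  linarith

theorem le_add_left (hC : IsCopula C) {u u' v : ℝ} (hu : 0 ≤ u) (huu : u ≤ u') (hu' : u' ≤ 1)
    (hv : 0 ≤ v) (hv' : v ≤ 1) : C u' v ≤ C u v + (u' - u) := by
  have h := hC.2 u u' v 1 hu huu hu' hv hv' le_rfl
  have h1 := (hC.1 u ⟨hu, huu.trans hu'⟩).2.2.1
  have h2 := (hC.1 u' ⟨hu.trans huu, hu'⟩).2.2.1
  linarith

theorem le_add_max_left (hC : IsCopula C) {u u' v : ℝ} (hu : u ∈ Icc (0 : ℝ) 1)
    (hu' : u' ∈ Icc (0 : ℝ) 1) (hv : v ∈ Icc (0 : ℝ) 1) :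
    C u v ≤ C u' v + max (u - u') 0 := by
  rcases le_total u u' with h | h
  · linarith [hC.mono_left hu.1 h hu'.2 hv.1 hv.2, le_max_right (u - u') 0]
  · linarith [hC.le_add_left hu'.1 h hu.2 hv.1 hv.2, le_max_left (u - u') 0]

/-- A copula is increasing and 1-Lipschitz in each variable. -/
theorem le_add_max (hC : IsCopula C) {u u' v v' : ℝ} (hu : u ∈ Icc (0 : ℝ) 1)
    (hu' : u' ∈ Icc (0 : ℝ) 1) (hv : v ∈ Icc (0 : ℝ) 1) (hv' : v' ∈ Icc (0 : ℝ) 1) :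
    C u v ≤ C u' v' + max (u - u') 0 + max (v - v') 0 := by
  have h1 := hC.le_add_max_left hu hu' hv
  have h2 := hC.transpose.le_add_max_left hv hv' hu'
  linarith

theorem le_left (hC : IsCopula C) {u v : ℝ} (hu : u ∈ Icc (0 : ℝ) 1) (hv : v ∈ Icc (0 : ℝ) 1) :
    C u v ≤ u := by
  have h := hC.transpose.mono_left hv.1 hv.2 le_rfl hu.1 hu.2
  have h1 := (hC.1 u hu).2.2.1
  linarith

theorem nonneg (hC : IsCopula C) {u v : ℝ} (hu : u ∈ Icc (0 : ℝ) 1) (hv : v ∈ Icc (0 : ℝ) 1) :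
    0 ≤ C u v := by
  have h := hC.mono_left le_rfl hu.1 hu.2 hv.1 hv.2
  have h1 := (hC.1 v hv).2.1
  linarith

theorem add_sub_one_le (hC : IsCopula C) {u v : ℝ} (hu : u ∈ Icc (0 : ℝ) 1)
    (hv : v ∈ Icc (0 : ℝ) 1) : u + v - 1 ≤ C u v := by
  have h := hC.le_add_left hu.1 hu.2 le_rfl hv.1 hv.2
  have h1 := (hC.1 v hv).2.2.2
  linarith

theorem le_right (hC : IsCopula C) {u v : ℝ} (hu : u ∈ Icc (0 : ℝ) 1) (hv : v ∈ Icc (0 : ℝ) 1) :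
    C u v ≤ v :=
  hC.transpose.le_left hv hu

theorem abs_sub_le (hC : IsCopula C) {u u' v v' : ℝ} (hu : u ∈ Icc (0 : ℝ) 1)
    (hu' : u' ∈ Icc (0 : ℝ) 1) (hv : v ∈ Icc (0 : ℝ) 1) (hv' : v' ∈ Icc (0 : ℝ) 1) :
    |C u v - C u' v'| ≤ |u - u'| + |v - v'| := by
  have h1 := hC.le_add_max hu hu' hv hv'
  have h2 := hC.le_add_max hu' hu hv' hv
  have key : ∀ x : ℝ, max x 0 ≤ |x| := fun x => max_le (le_abs_self x) (abs_nonneg x)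
  have k1 := key (u - u')
  have k2 := key (v - v')
  have k3 := key (u' - u)
  have k4 := key (v' - v)
  rw [abs_sub_comm u' u] at k3
  rw [abs_sub_comm v' v] at k4
  exact abs_le.2 ⟨by linarith, by linarith⟩

theorem continuousOn_diag (hC : IsCopula C) : ContinuousOn (fun u => C u u) (Icc 0 1) := by
  refine (LipschitzOnWith.of_dist_le_mul (K := 2) fun x hx y hy => ?_).continuousOn
  have := hC.abs_sub_le hx hy hx hy
  simp only [Real.dist_eq, NNReal.coe_ofNat]
  linarith

theorem continuousOn_antidiag (hC : IsCopula C) :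
    ContinuousOn (fun u => C u (1 - u)) (Icc 0 1) := by
  refine (LipschitzOnWith.of_dist_le_mul (K := 2) fun x hx y hy => ?_).continuousOn
  have := hC.abs_sub_le hx hy (one_sub_mem_Icc hx)
    (one_sub_mem_Icc hy)
  rw [show (1 - x) - (1 - y) = -(x - y) by ring, abs_neg] at this
  simp only [Real.dist_eq, NNReal.coe_ofNat]
  linarith

end IsCopula

section Integrals

variable {f : ℝ → ℝ}

theorem intervalIntegrable_of_continuousOn_unit (hf : ContinuousOn f (Icc 0 1)) {p q : ℝ}
    (hp : 0 ≤ p) (hpq : p ≤ q) (hq : q ≤ 1) : IntervalIntegrable f volume p q := by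
  refine ContinuousOn.intervalIntegrable ?_
  rw [uIcc_of_le hpq]
  exact hf.mono (Icc_subset_Icc hp hq)

theorem integral_split (hf : ContinuousOn f (Icc 0 1)) {p q : ℝ} (hp : 0 ≤ p) (hpq : p ≤ q)
    (hq : q ≤ 1) : ∫ u in p..1, f u = (∫ u in p..q, f u) + ∫ u in q..1, f u :=
  (integral_add_adjacent_intervals (intervalIntegrable_of_continuousOn_unit hf hp hpq hq)
    (intervalIntegrable_of_continuousOn_unit hf (hp.trans hpq) hq le_rfl)).symm

theorem integral_affine (α β p q : ℝ) :
    ∫ u in p..q, (α + β * u) = α * (q - p) + β * (q ^ 2 - p ^ 2) / 2 := by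
  rw [integral_add (by simp) (Continuous.intervalIntegrable (by fun_prop) _ _),
    intervalIntegral.integral_const, intervalIntegral.integral_const_mul β fun u => u, integral_id,
    smul_eq_mul]
  ring

theorem integral_le_affine (hf : ContinuousOn f (Icc 0 1)) {p q : ℝ} (α β : ℝ) (hp : 0 ≤ p)
    (hpq : p ≤ q) (hq : q ≤ 1) (h : ∀ u ∈ Icc (0 : ℝ) 1, p ≤ u → u ≤ q → f u ≤ α + β * u) :
    ∫ u in p..q, f u ≤ α * (q - p) + β * (q ^ 2 - p ^ 2) / 2 := by
  rw [← integral_affine]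
  exact integral_mono_on hpq (intervalIntegrable_of_continuousOn_unit hf hp hpq hq)
    (Continuous.intervalIntegrable (by fun_prop) _ _)
    fun u hu => h u ⟨hp.trans hu.1, hu.2.trans hq⟩ hu.1 hu.2

theorem affine_le_integral (hf : ContinuousOn f (Icc 0 1)) {p q : ℝ} (α β : ℝ) (hp : 0 ≤ p)
    (hpq : p ≤ q) (hq : q ≤ 1) (h : ∀ u ∈ Icc (0 : ℝ) 1, p ≤ u → u ≤ q → α + β * u ≤ f u) :
    α * (q - p) + β * (q ^ 2 - p ^ 2) / 2 ≤ ∫ u in p..q, f u := by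
  rw [← integral_affine]
  exact integral_mono_on hpq (Continuous.intervalIntegrable (by fun_prop) _ _)
    (intervalIntegrable_of_continuousOn_unit hf hp hpq hq)
    fun u hu => h u ⟨hp.trans hu.1, hu.2.trans hq⟩ hu.1 hu.2

theorem integral_comp_one_sub : ∫ u in (0 : ℝ)..1, f (1 - u) = ∫ u in (0 : ℝ)..1, f u := by
  simp

/-- A function above a triangle of height `m` and slopes `±1` has integral at least `m²`. -/
theorem sq_le_integral_of_tent (hf : ContinuousOn f (Icc 0 1)) {a m : ℝ} (hm : 0 ≤ m)
    (ham : m ≤ a) (ham' : a + m ≤ 1) (h0 : ∀ u ∈ Icc (0 : ℝ) 1, 0 ≤ f u)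
    (h1 : ∀ u ∈ Icc (0 : ℝ) 1, m - |u - a| ≤ f u) : m ^ 2 ≤ ∫ u in (0 : ℝ)..1, f u := by
  rw [integral_split hf le_rfl (show 0 ≤ a - m by linarith) (by linarith),
    integral_split hf (show 0 ≤ a - m by linarith) (show a - m ≤ a by linarith) (by linarith),
    integral_split hf (show 0 ≤ a by linarith) (show a ≤ a + m by linarith) (by linarith)]
  have i1 := affine_le_integral hf (p := 0) (q := a - m) 0 0 (by linarith) (by linarith)
    (by linarith) fun u hu _ _ => by linarith [h0 u hu]
  have i2 := affine_le_integral hf (p := a - m) (q := a) (m - a) 1 (by linarith) (by linarith)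
    (by linarith) fun u hu _ h => by
      have := h1 u hu
      rw [abs_of_nonpos (by linarith)] at this
      linarith
  have i3 := affine_le_integral hf (p := a) (q := a + m) (m + a) (-1) (by linarith) (by linarith)
    (by linarith) fun u hu h _ => by
      have := h1 u hu
      rw [abs_of_nonneg (by linarith)] at this
      linarith
  have i4 := affine_le_integral hf (p := a + m) (q := 1) 0 0 (by linarith) (by linarith)
    (by linarith) fun u hu _ _ => by linarith [h0 u hu]
  linarith

/-- Integral bound for a function below the identity with a trapezoidal dent of depth `m`. -/
theorem integral_le_of_dent (hf : ContinuousOn f (Icc 0 1)) {a m : ℝ} (hm : 0 ≤ m)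
    (ham : m ≤ a) (ham' : a + 2 * m ≤ 1) (h0 : ∀ u ∈ Icc (0 : ℝ) 1, f u ≤ u)
    (h1 : ∀ u ∈ Icc (0 : ℝ) 1, f u ≤ a - m + max (u - a) 0 + max (u - (a + m)) 0) :
    ∫ u in (0 : ℝ)..1, f u ≤ 1 / 2 - 2 * m ^ 2 := by
  rw [integral_split hf le_rfl (show 0 ≤ a - m by linarith) (by linarith),
    integral_split hf (show 0 ≤ a - m by linarith) (show a - m ≤ a by linarith) (by linarith),
    integral_split hf (show 0 ≤ a by linarith) (show a ≤ a + m by linarith) (by linarith),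
    integral_split hf (show 0 ≤ a + m by linarith) (show a + m ≤ a + 2 * m by linarith) ham']
  have i1 := integral_le_affine hf (p := 0) (q := a - m) 0 1 (by linarith) (by linarith)
    (by linarith) fun u hu _ _ => by linarith [h0 u hu]
  have i2 := integral_le_affine hf (p := a - m) (q := a) (a - m) 0 (by linarith) (by linarith)
    (by linarith) fun u hu _ h => by
      have := h1 u hu
      rw [max_eq_right (by linarith), max_eq_right (by linarith)] at this
      linarith
  have i3 := integral_le_affine hf (p := a) (q := a + m) (-m) 1 (by linarith) (by linarith)
    (by linarith) fun u hu h h' => by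
      have := h1 u hu
      rw [max_eq_left (by linarith), max_eq_right (by linarith)] at this
      linarith
  have i4 := integral_le_affine hf (p := a + m) (q := a + 2 * m) (-a - 2 * m) 2 (by linarith)
    (by linarith) (by linarith) fun u hu h h' => by
      have := h1 u hu
      rw [max_eq_left (by linarith), max_eq_left (by linarith)] at this
      linarith
  have i5 := integral_le_affine hf (p := a + 2 * m) (q := 1) 0 1 (by linarith) (by linarith)
    (by linarith) fun u hu _ _ => by linarith [h0 u hu]
  linarith

theorem quarter_le_integral (hf : ContinuousOn f (Icc 0 1)) (h0 : ∀ u ∈ Icc (0 : ℝ) 1, 0 ≤ f u)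
    (h1 : ∀ u ∈ Icc (0 : ℝ) 1, 2 * u - 1 ≤ f u) : 1 / 4 ≤ ∫ u in (0 : ℝ)..1, f u := by
  rw [integral_split hf le_rfl (show (0 : ℝ) ≤ 1 / 2 by norm_num) (by norm_num)]
  have i1 := affine_le_integral hf (p := 0) (q := 1 / 2) 0 0 (by linarith) (by linarith)
    (by linarith) fun u hu _ _ => by linarith [h0 u hu]
  have i2 := affine_le_integral hf (p := 1 / 2) (q := 1) (-1) 2 (by linarith) (by linarith)
    (by linarith) fun u hu _ _ => by linarith [h1 u hu]
  linarith

theorem le_integral_of_large_asymmetry (hf : ContinuousOn f (Icc 0 1)) {m : ℝ} (hm : 1 / 4 ≤ m)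
    (hm' : m ≤ 1 / 3) (h0 : ∀ u ∈ Icc (0 : ℝ) 1, 0 ≤ f u)
    (h1 : ∀ u ∈ Icc (0 : ℝ) 1, 2 * u - 1 ≤ f u)
    (h2 : ∀ u ∈ Icc (0 : ℝ) 1, 1 - 2 * m ≤ u → u ≤ 2 * m → 2 * m - 1 + u ≤ f u) :
    1 / 4 + (2 * m - 1 / 2) ^ 2 ≤ ∫ u in (0 : ℝ)..1, f u := by
  rw [integral_split hf le_rfl (show 0 ≤ 1 - 2 * m by linarith) (by linarith),
    integral_split hf (show 0 ≤ 1 - 2 * m by linarith) (show 1 - 2 * m ≤ 2 * m by linarith)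
      (by linarith)]
  have i1 := affine_le_integral hf (p := 0) (q := 1 - 2 * m) 0 0 (by linarith) (by linarith)
    (by linarith) fun u hu _ _ => by linarith [h0 u hu]
  have i2 := affine_le_integral hf (p := 1 - 2 * m) (q := 2 * m) (2 * m - 1) 1 (by linarith)
    (by linarith) (by linarith) fun u hu h h' => by linarith [h2 u hu h h']
  have i3 := affine_le_integral hf (p := 2 * m) (q := 1) (-1) 2 (by linarith) (by linarith)
    (by linarith) fun u hu _ _ => by linarith [h1 u hu]
  linarith

theorem integral_le_quarter (hf : ContinuousOn f (Icc 0 1)) (h0 : ∀ u ∈ Icc (0 : ℝ) 1, f u ≤ u)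
    (h1 : ∀ u ∈ Icc (0 : ℝ) 1, f u ≤ 1 - u) : ∫ u in (0 : ℝ)..1, f u ≤ 1 / 4 := by
  rw [integral_split hf le_rfl (show (0 : ℝ) ≤ 1 / 2 by norm_num) (by norm_num)]
  have i1 := integral_le_affine hf (p := 0) (q := 1 / 2) 0 1 (by linarith) (by linarith)
    (by linarith) fun u hu _ _ => by linarith [h0 u hu]
  have i2 := integral_le_affine hf (p := 1 / 2) (q := 1) 1 (-1) (by linarith) (by linarith)
    (by linarith) fun u hu _ _ => by linarith [h1 u hu]
  linarith

/-- Integral bounds for a function satisfying the extremal upper bounds on the antidiagonal. -/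
theorem integral_le_of_extremal (hf : ContinuousOn f (Icc 0 1)) {m : ℝ}
    (h0 : ∀ u ∈ Icc (0 : ℝ) 1, f u ≤ u) (h1 : ∀ u ∈ Icc (0 : ℝ) 1, f u ≤ 1 - u)
    (h2 : ∀ u ∈ Icc (0 : ℝ) 1, f u ≤ max (u - (1 - m)) 0 + max (1 - u) (1 - 2 * m) - m) :
    (1 / 6 ≤ m → m ≤ 1 / 5 → ∫ u in (0 : ℝ)..1, f u ≤ 3 * m - 9 * m ^ 2) ∧
    (1 / 5 ≤ m → m ≤ 1 / 4 → ∫ u in (0 : ℝ)..1, f u ≤ (1 + 2 * m - 11 * m ^ 2) / 4) ∧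
    (1 / 4 ≤ m → m ≤ 1 / 3 → ∫ u in (0 : ℝ)..1, f u ≤ (2 - 6 * m + 5 * m ^ 2) / 4) := by
  have hlow : ∀ u ∈ Icc (0 : ℝ) 1, u ≤ 2 * m → u ≤ 1 - m → f u ≤ 1 - u - m := by
    intro u hu h h'
    have := h2 u hu
    rw [max_eq_right (by linarith), max_eq_left (by linarith)] at this
    linarith
  have hmid : ∀ u ∈ Icc (0 : ℝ) 1, 2 * m ≤ u → u ≤ 1 - m → f u ≤ 1 - 3 * m := by
    intro u hu h h'
    have := h2 u hu
    rw [max_eq_right (by linarith), max_eq_right (by linarith)] at this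
    linarith
  have hhigh : ∀ u ∈ Icc (0 : ℝ) 1, 2 * m ≤ u → 1 - m ≤ u → f u ≤ u - 2 * m := by
    intro u hu h h'
    have := h2 u hu
    rw [max_eq_left (by linarith), max_eq_right (by linarith)] at this
    linarith
  refine ⟨fun hm hm' => ?_, fun hm hm' => ?_, fun hm hm' => ?_⟩
  · rw [integral_split hf le_rfl (show 0 ≤ 1 - 3 * m by linarith) (by linarith),
      integral_split hf (show 0 ≤ 1 - 3 * m by linarith) (show 1 - 3 * m ≤ 3 * m by linarith)
        (by linarith)]
    have i1 := integral_le_affine hf (p := 0) (q := 1 - 3 * m) 0 1 (by linarith) (by linarith)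
      (by linarith) fun u hu _ _ => by linarith [h0 u hu]
    have i2 := integral_le_affine hf (p := 1 - 3 * m) (q := 3 * m) (1 - 3 * m) 0 (by linarith)
      (by linarith) (by linarith)
      fun u hu h h' => by linarith [hmid u hu (by linarith) (by linarith)]
    have i3 := integral_le_affine hf (p := 3 * m) (q := 1) 1 (-1) (by linarith) (by linarith)
      (by linarith) fun u hu _ _ => by linarith [h1 u hu]
    linarith
  · rw [integral_split hf le_rfl (show 0 ≤ (1 - m) / 2 by linarith) (by linarith),
      integral_split hf (show 0 ≤ (1 - m) / 2 by linarith)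
        (show (1 - m) / 2 ≤ 2 * m by linarith) (by linarith),
      integral_split hf (show 0 ≤ 2 * m by linarith) (show 2 * m ≤ 3 * m by linarith)
        (by linarith)]
    have i1 := integral_le_affine hf (p := 0) (q := (1 - m) / 2) 0 1 (by linarith) (by linarith)
      (by linarith) fun u hu _ _ => by linarith [h0 u hu]
    have i2 := integral_le_affine hf (p := (1 - m) / 2) (q := 2 * m) (1 - m) (-1) (by linarith)
      (by linarith) (by linarith)
      fun u hu h h' => by linarith [hlow u hu (by linarith) (by linarith)]
    have i3 := integral_le_affine hf (p := 2 * m) (q := 3 * m) (1 - 3 * m) 0 (by linarith)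
      (by linarith) (by linarith)
      fun u hu h h' => by linarith [hmid u hu (by linarith) (by linarith)]
    have i4 := integral_le_affine hf (p := 3 * m) (q := 1) 1 (-1) (by linarith) (by linarith)
      (by linarith) fun u hu _ _ => by linarith [h1 u hu]
    linarith
  · rw [integral_split hf le_rfl (show 0 ≤ (1 - m) / 2 by linarith) (by linarith),
      integral_split hf (show 0 ≤ (1 - m) / 2 by linarith)
        (show (1 - m) / 2 ≤ 2 * m by linarith) (by linarith),
      integral_split hf (show 0 ≤ 2 * m by linarith) (show 2 * m ≤ 1 - m by linarith)
        (by linarith),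
      integral_split hf (show 0 ≤ 1 - m by linarith) (show 1 - m ≤ 1 / 2 + m by linarith)
        (by linarith)]
    have i1 := integral_le_affine hf (p := 0) (q := (1 - m) / 2) 0 1 (by linarith) (by linarith)
      (by linarith) fun u hu _ _ => by linarith [h0 u hu]
    have i2 := integral_le_affine hf (p := (1 - m) / 2) (q := 2 * m) (1 - m) (-1) (by linarith)
      (by linarith) (by linarith)
      fun u hu h h' => by linarith [hlow u hu (by linarith) (by linarith)]
    have i3 := integral_le_affine hf (p := 2 * m) (q := 1 - m) (1 - 3 * m) 0 (by linarith)
      (by linarith) (by linarith)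
      fun u hu h h' => by linarith [hmid u hu (by linarith) (by linarith)]
    have i4 := integral_le_affine hf (p := 1 - m) (q := 1 / 2 + m) (-2 * m) 1 (by linarith)
      (by linarith) (by linarith)
      fun u hu h h' => by linarith [hhigh u hu (by linarith) (by linarith)]
    have i5 := integral_le_affine hf (p := 1 / 2 + m) (q := 1) 1 (-1) (by linarith) (by linarith)
      (by linarith) fun u hu _ _ => by linarith [h1 u hu]
    linarith

end Integrals

namespace IsCopula

variable {C : ℝ → ℝ → ℝ}

theorem giniGamma_eq (hC : IsCopula C) :
    giniGamma C = 4 * ((∫ u in (0 : ℝ)..1, C u u) + ∫ u in (0 : ℝ)..1, C u (1 - u)) - 2 := by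
  rw [giniGamma, integral_add
    (intervalIntegrable_of_continuousOn_unit hC.continuousOn_diag le_rfl zero_le_one le_rfl)
    (intervalIntegrable_of_continuousOn_unit hC.continuousOn_antidiag le_rfl zero_le_one le_rfl)]

theorem giniGamma_transpose (hC : IsCopula C) : giniGamma (fun u v => C v u) = giniGamma C := by
  rw [hC.giniGamma_eq, hC.transpose.giniGamma_eq,
    ← integral_comp_one_sub (f := fun u => C u (1 - u))]
  simp only [sub_sub_cancel]

/-- Constraints on a point at which a copula has asymmetry `m`. -/
theorem asymmetry_constraints (hC : IsCopula C) {a b m : ℝ} (ha : a ∈ Icc (0 : ℝ) 1)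
    (hb : b ∈ Icc (0 : ℝ) 1) (hab : a ≤ b) (h : C a b - C b a = m) :
    m ≤ a ∧ b ≤ 1 - m ∧ a + m ≤ b := by
  have h1 := hC.le_left ha hb
  have h2 := hC.nonneg hb ha
  have h3 := hC.add_sub_one_le hb ha
  have h4 := hC.le_add_max ha hb hb ha
  rw [max_eq_right (by linarith), max_eq_left (by linarith)] at h4
  exact ⟨by linarith, by linarith, by linarith⟩

theorem diag_integral_le (hC : IsCopula C) {a b m : ℝ} (ha : a ∈ Icc (0 : ℝ) 1)
    (hb : b ∈ Icc (0 : ℝ) 1) (hab : a ≤ b) (hm : 0 ≤ m) (h : C a b - C b a = m) :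
    ∫ u in (0 : ℝ)..1, C u u ≤ 1 / 2 - 2 * m ^ 2 := by
  obtain ⟨c1, c2, c3⟩ := hC.asymmetry_constraints ha hb hab h
  refine integral_le_of_dent hC.continuousOn_diag hm c1 (by linarith)
    (fun u hu => hC.le_left hu hu) fun u hu => ?_
  have h1 := hC.le_add_max hu hb hu ha
  have h2 := hC.le_left ha hb
  have h3 : max (u - b) 0 ≤ max (u - (a + m)) 0 := max_le_max (by linarith) le_rfl
  linarith

theorem antidiag_integral_le (hC : IsCopula C) {a b m : ℝ} (ha : a ∈ Icc (0 : ℝ) 1)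
    (hb : b ∈ Icc (0 : ℝ) 1) (hab : a ≤ b) (h : C a b - C b a = m) :
    (1 / 6 ≤ m → m ≤ 1 / 5 → ∫ u in (0 : ℝ)..1, C u (1 - u) ≤ 3 * m - 9 * m ^ 2) ∧
    (1 / 5 ≤ m → m ≤ 1 / 4 →
      ∫ u in (0 : ℝ)..1, C u (1 - u) ≤ (1 + 2 * m - 11 * m ^ 2) / 4) ∧
    (1 / 4 ≤ m → m ≤ 1 / 3 →
      ∫ u in (0 : ℝ)..1, C u (1 - u) ≤ (2 - 6 * m + 5 * m ^ 2) / 4) := by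
  obtain ⟨c1, c2, c3⟩ := hC.asymmetry_constraints ha hb hab h
  have hab' := hC.le_left ha hb
  refine integral_le_of_extremal hC.continuousOn_antidiag
    (fun u hu => hC.le_left hu (one_sub_mem_Icc hu))
    (fun u hu => hC.le_right hu (one_sub_mem_Icc hu)) fun u hu => ?_
  have h1 := hC.le_add_max hu hb (one_sub_mem_Icc hu) ha
  rcases le_total 1 (a + b) with hs | hs <;> grind

theorem sq_le_antidiag_integral (hC : IsCopula C) {a b m : ℝ} (ha : a ∈ Icc (0 : ℝ) 1)
    (hb : b ∈ Icc (0 : ℝ) 1) (hab : a ≤ b) (hm : 0 ≤ m) (h : C a b - C b a = m) :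
    m ^ 2 ≤ ∫ u in (0 : ℝ)..1, C u (1 - u) := by
  obtain ⟨c1, c2, c3⟩ := hC.asymmetry_constraints ha hb hab h
  refine sq_le_integral_of_tent hC.continuousOn_antidiag hm c1 (by linarith)
    (fun u hu => hC.nonneg hu (one_sub_mem_Icc hu)) fun u hu => ?_
  have h1 := hC.le_add_max ha hu hb (one_sub_mem_Icc hu)
  have h2 := hC.nonneg hb ha
  have h3 := hC.add_sub_one_le hb ha
  have h4 : max (a - u) 0 + max (b - (1 - u)) 0 ≤ max (a + b - 1) 0 + |u - a| := by
    grind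
  have h5 : max (a + b - 1) 0 ≤ C b a := max_le (by linarith) h2
  linarith

theorem le_diag_of_large_asymmetry (hC : IsCopula C) {a b m : ℝ} (ha : a ∈ Icc (0 : ℝ) 1)
    (hb : b ∈ Icc (0 : ℝ) 1) (hab : a ≤ b)
    (h : C a b - C b a = m) {u : ℝ} (hu : u ∈ Icc (0 : ℝ) 1) (hu1 : 1 - 2 * m ≤ u)
    (hu2 : u ≤ 2 * m) : 2 * m - 1 + u ≤ C u u := by
  obtain ⟨c1, c2, c3⟩ := hC.asymmetry_constraints ha hb hab h
  have h1 := hC.le_add_max ha hu hb hu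
  have h2 := hC.nonneg hb ha
  have h3 := hC.add_sub_one_le hb ha
  grind

theorem giniGamma_bounds (hC : IsCopula C) {a b m : ℝ} (ha : a ∈ Icc (0 : ℝ) 1)
    (hb : b ∈ Icc (0 : ℝ) 1) (hab : a ≤ b) (hm : 0 ≤ m) (h : C a b - C b a = m) :
    (4 * m ^ 2 - 1 ≤ giniGamma C ∧
      (1 / 4 ≤ m → m ≤ 1 / 3 → 20 * m ^ 2 - 8 * m ≤ giniGamma C)) ∧
    giniGamma C ≤ 1 - 8 * m ^ 2 ∧
    (1 / 6 ≤ m → m ≤ 1 / 5 → giniGamma C ≤ 12 * m - 44 * m ^ 2) ∧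
    (1 / 5 ≤ m → m ≤ 1 / 4 → giniGamma C ≤ 1 + 2 * m - 19 * m ^ 2) ∧
    (1 / 4 ≤ m → m ≤ 1 / 3 → giniGamma C ≤ 2 - 6 * m - 3 * m ^ 2) := by
  have hW : ∀ u ∈ Icc (0 : ℝ) 1, 2 * u - 1 ≤ C u u := fun u hu => by
    linarith [hC.add_sub_one_le hu hu]
  have hd := hC.diag_integral_le ha hb hab hm h
  have he := hC.sq_le_antidiag_integral ha hb hab hm h
  obtain ⟨e1, e2, e3⟩ := hC.antidiag_integral_le ha hb hab h
  rw [hC.giniGamma_eq]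
  refine ⟨⟨?_, fun h1 h2 => ?_⟩, ?_, fun h1 h2 => ?_, fun h1 h2 => ?_, fun h1 h2 => ?_⟩
  · linarith [quarter_le_integral hC.continuousOn_diag (fun u hu => hC.nonneg hu hu) hW]
  · linarith [le_integral_of_large_asymmetry hC.continuousOn_diag h1 h2
      (fun u hu => hC.nonneg hu hu) hW
      fun u hu k1 k2 => hC.le_diag_of_large_asymmetry ha hb hab h hu k1 k2]
  · linarith [integral_le_quarter hC.continuousOn_antidiag
      (fun u hu => hC.le_left hu (one_sub_mem_Icc hu))
      fun u hu => hC.le_right hu (one_sub_mem_Icc hu)]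
  · linarith [e1 h1 h2]
  · linarith [e2 h1 h2]
  · linarith [e3 h1 h2]

end IsCopula

theorem gamma_vs_asymmetry (C : ℝ → ℝ → ℝ) (m : ℝ) (hC : IsCopula C)
    (hbound : ∀ u ∈ Set.Icc (0:ℝ) 1, ∀ v ∈ Set.Icc (0:ℝ) 1, |C u v - C v u| ≤ m)
    (hattain : ∃ a ∈ Set.Icc (0:ℝ) 1, ∃ b ∈ Set.Icc (0:ℝ) 1, |C a b - C b a| = m) :
    ((0 ≤ m → m ≤ 1/4 → 4 * m^2 - 1 ≤ giniGamma C) ∧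
     (1/4 ≤ m → m ≤ 1/3 → 20 * m^2 - 8 * m ≤ giniGamma C)) ∧
    ((0 ≤ m → m ≤ 1/6 → giniGamma C ≤ 1 - 8 * m^2) ∧
     (1/6 ≤ m → m ≤ 1/5 → giniGamma C ≤ 12 * m - 44 * m^2) ∧
     (1/5 ≤ m → m ≤ 1/4 → giniGamma C ≤ 1 + 2 * m - 19 * m^2) ∧
     (1/4 ≤ m → m ≤ 1/3 → giniGamma C ≤ 2 - 6 * m - 3 * m^2)) ∧
    (m = 1/3 → giniGamma C ∈ Set.Icc (-(4:ℝ)/9) (-(1:ℝ)/3)) := by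
  obtain ⟨a, ha, b, hb, h⟩ := hattain
  have hm : 0 ≤ m := h ▸ abs_nonneg _
  have key : (4 * m ^ 2 - 1 ≤ giniGamma C ∧
      (1 / 4 ≤ m → m ≤ 1 / 3 → 20 * m ^ 2 - 8 * m ≤ giniGamma C)) ∧
      giniGamma C ≤ 1 - 8 * m ^ 2 ∧
      (1 / 6 ≤ m → m ≤ 1 / 5 → giniGamma C ≤ 12 * m - 44 * m ^ 2) ∧
      (1 / 5 ≤ m → m ≤ 1 / 4 → giniGamma C ≤ 1 + 2 * m - 19 * m ^ 2) ∧
      (1 / 4 ≤ m → m ≤ 1 / 3 → giniGamma C ≤ 2 - 6 * m - 3 * m ^ 2) := by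
    rcases le_total a b with hab | hab <;> rcases (abs_eq hm).1 h with h | h
    · exact hC.giniGamma_bounds ha hb hab hm h
    · rw [← hC.giniGamma_transpose]
      exact hC.transpose.giniGamma_bounds ha hb hab hm (by linarith)
    · rw [← hC.giniGamma_transpose]
      exact hC.transpose.giniGamma_bounds hb ha hab hm h
    · exact hC.giniGamma_bounds hb ha hab hm (by linarith)
  obtain ⟨⟨l1, l2⟩, u1, u2, u3, u4⟩ := key
  refine ⟨⟨fun _ _ => l1, l2⟩, ⟨fun _ _ => u1, u2, u3, u4⟩, ?_⟩
  rintro rfl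
  have k1 := l2 (by norm_num) le_rfl
  have k2 := u4 (by norm_num) le_rfl
  norm_num at k1 k2 ⊢
  exact ⟨k1, k2⟩
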